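/- Let k ≥ 1 and let G = (V,E) be a finite simple graph with |V| ≥ k whose girth is at least 5, i.e., G contains no cycle of length smaller than 5. Then ∑_{i=1}^{k} λ_i(L(G)) ≤ |E| + ⌊k√(2k − 1)⌋. -/

import Mathlib

open Finset

/-- The `i`-th largest entry (1-indexed, so `i = 1` gives the maximum) of a tuple
`f : Fin n → ℝ`, counted with multiplicity. Junk value `0` outside the range `1 ≤ i ≤ n`. -/
noncomputable def ithLargest {n : ℕ} (f : Fin n → ℝ) (i : ℕ) : ℝ :=
  if h : 1 ≤ i ∧ i ≤ n then f (Tuple.sort f (Fin.rev ⟨i - 1, by omega⟩)) else 0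

/-- The eigenvalues of the Laplacian matrix of a finite simple graph `G`
(as a tuple indexed by the vertices, with multiplicity). -/
noncomputable def lapEigs {n : ℕ} (G : SimpleGraph (Fin n)) [DecidableRel G.Adj] :
    Fin n → ℝ :=
  (SimpleGraph.posSemidef_lapMatrix ℝ G).isHermitian.eigenvalues

/-- The degree sequence of `G`, as a real-valued tuple indexed by the vertices. -/
noncomputable def degTuple {n : ℕ} (G : SimpleGraph (Fin n)) [DecidableRel G.Adj] :
    Fin n → ℝ :=
  fun v => (G.degree v : ℝ)

/-!
Let `yⱼ` be orthonormal eigenvectors of `L` for the eigenvalues `λⱼ`, let `D` be the degree matrix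
and let `S` be a set of `k` indices. The weights `b v = ∑ j ∈ S, λⱼ yⱼ(v)²` add up to
`∑ j ∈ S, λⱼ` and satisfy `0 ≤ b v ≤ deg v`, because `L` is positive semidefinite with diagonal
`deg`. Cauchy–Schwarz at each vertex gives `L D⁻¹ L ≤ 2 L`, hence `∑ v, b v / deg v ≤ 2 k`. So
`∑ v, b v` is a fractional selection of at most `2 k` degrees, and is bounded by the sum of the
degrees over some set `U` of at most `2 k` vertices.

That sum is at most `|E| + e(U)`, where `e(U)` is the number of edges inside `U`. In a graph of
girth at least 5 on `m` vertices the degrees of the neighbours of any vertex add up to at most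
`m - 1`, so `∑ v, deg(v)² ≤ m (m - 1)` and, by Cauchy–Schwarz, there are at most
`m √(m - 1) / 2` edges. Applied to the subgraph induced on `U` this gives `e(U) ≤ k √(2 k - 1)`,
and `e(U)` is an integer.
-/

section OrderStatistics

lemma exists_card_eq_sum_ithLargest_eq {n k : ℕ} (f : Fin n → ℝ) (hk : k ≤ n) :
    ∃ S : Finset (Fin n), #S = k ∧ ∑ i ∈ Icc 1 k, ithLargest f i = ∑ j ∈ S, f j := by
  have sort_injective :
      Function.Injective fun i : Fin k ↦ Tuple.sort f (Fin.rev (Fin.castLE hk i)) :=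
    (Tuple.sort f).injective.comp (Fin.rev_injective.comp (Fin.castLE_injective hk))
  refine ⟨univ.map ⟨_, sort_injective⟩, by simp, ?_⟩
  have shift : ∑ i ∈ Icc 1 k, ithLargest f i = ∑ i ∈ range k, ithLargest f (i + 1) := by
    rw [range_eq_Ico, sum_Ico_add']
    rfl
  rw [shift, sum_range, sum_map]
  refine sum_congr rfl fun i _ ↦ ?_
  exact dif_pos (⟨by omega, by omega⟩ : 1 ≤ (i : ℕ) + 1 ∧ (i : ℕ) + 1 ≤ n)

variable {ι R : Type*} [Fintype ι]

lemma exists_card_eq_forall_notMem_le_mem [LinearOrder R] (d : ι → R) {N : ℕ}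
    (hN : N ≤ Fintype.card ι) :
    ∃ U : Finset ι, #U = N ∧ ∀ u ∈ U, ∀ v ∉ U, d v ≤ d u := by
  classical
  induction N with
  | zero => exact ⟨∅, by simp⟩
  | succ N ih =>
    obtain ⟨U, hU, hd⟩ := ih (by omega)
    have compl_nonempty : Uᶜ.Nonempty := by
      rw [← card_pos, card_compl]
      omega
    obtain ⟨m, hm, hmax⟩ := exists_max_image Uᶜ d compl_nonempty
    refine ⟨insert m U, by rw [card_insert_of_notMem (mem_compl.mp hm), hU], ?_⟩
    intro u hu v hv
    simp only [mem_insert, not_or] at hu hv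
    rcases hu with rfl | hu
    · exact hmax v (mem_compl.mpr hv.2)
    · exact hd u hu v hv.2

/-- The linear relaxation of the knapsack problem with unit weights has an integral optimum. -/
lemma exists_card_le_sum_mul_le_sum [CommRing R] [LinearOrder R] [IsStrictOrderedRing R]
    {d w : ι → R} {N : ℕ} (hd : ∀ i, 0 ≤ d i) (hw₀ : ∀ i, 0 ≤ w i) (hw₁ : ∀ i, w i ≤ 1)
    (hw : ∑ i, w i ≤ N) :
    ∃ U : Finset ι, #U ≤ N ∧ ∑ i, d i * w i ≤ ∑ i ∈ U, d i := by
  classical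
  rcases le_or_gt (Fintype.card ι) N with hN | hN
  · exact ⟨univ, hN, sum_le_sum fun i _ ↦ mul_le_of_le_one_right (hd i) (hw₁ i)⟩
  obtain ⟨U, hU, hle⟩ := exists_card_eq_forall_notMem_le_mem d hN.le
  obtain ⟨m, hm, hmax⟩ := exists_max_image Uᶜ d (by rw [← card_pos, card_compl]; omega)
  have above (i : ι) (hi : i ∈ U) : d m ≤ d i := hle i hi m (mem_compl.mp hm)
  have below (i : ι) (hi : i ∉ U) : d i ≤ d m := hmax i (mem_compl.mpr hi)
  refine ⟨U, hU.le, ?_⟩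
  have pointwise (i : ι) : d i * w i ≤ d m * w i + if i ∈ U then d i - d m else 0 := by
    split_ifs with hi
    · linear_combination mul_le_of_le_one_right (sub_nonneg.mpr (above i hi)) (hw₁ i)
    · simpa using mul_le_mul_of_nonneg_right (below i hi) (hw₀ i)
  calc ∑ i, d i * w i
      ≤ ∑ i, (d m * w i + if i ∈ U then d i - d m else 0) := sum_le_sum fun i _ ↦ pointwise i
    _ = d m * ∑ i, w i + (∑ i ∈ U, d i - N * d m) := by
        simp [sum_add_distrib, mul_sum, hU]
    _ ≤ d m * N + (∑ i ∈ U, d i - N * d m) := by gcongr; exact hd m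
    _ = ∑ i ∈ U, d i := by ring

end OrderStatistics

section SpectralDiagonal

variable {ι 𝕜 : Type*} [Fintype ι] [DecidableEq ι] [RCLike 𝕜] {A : Matrix ι ι 𝕜}

/-- The diagonal of the spectral truncation `∑ j ∈ S, λⱼ yⱼ yⱼᴴ` of a Hermitian matrix with
eigenvalues `λⱼ` and orthonormal eigenvectors `yⱼ`. It spreads the partial trace `∑ j ∈ S, λⱼ`
over the coordinates; its entries are real, so it is encoded as real-valued. -/
noncomputable def spectralDiag (hA : A.IsHermitian) (S : Finset ι) (i : ι) : ℝ :=
  ∑ j ∈ S, hA.eigenvalues j * ‖hA.eigenvectorBasis j i‖ ^ 2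

lemma sum_norm_sq_eigenvectorBasis (hA : A.IsHermitian) (j : ι) :
    ∑ i, ‖hA.eigenvectorBasis j i‖ ^ 2 = 1 := by
  rw [← EuclideanSpace.norm_sq_eq, hA.eigenvectorBasis.norm_eq_one, one_pow]

lemma sum_spectralDiag (hA : A.IsHermitian) (S : Finset ι) :
    ∑ i, spectralDiag hA S i = ∑ j ∈ S, hA.eigenvalues j := by
  simp_rw [spectralDiag]
  rw [sum_comm]
  simp_rw [← mul_sum, sum_norm_sq_eigenvectorBasis, mul_one]

lemma spectralDiag_univ (hA : A.IsHermitian) (i : ι) :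
    (spectralDiag hA univ i : 𝕜) = A i i := by
  conv_rhs => rw [hA.spectral_theorem]
  rw [Unitary.conjStarAlgAut_apply, Matrix.mul_apply, spectralDiag, RCLike.ofReal_sum]
  refine sum_congr rfl fun j _ ↦ ?_
  rw [Matrix.mul_diagonal, Matrix.star_apply, hA.eigenvectorUnitary_apply,
    Function.comp_apply, mul_right_comm, ← starRingEnd_apply, RCLike.mul_conj]
  push_cast
  ring

open scoped ComplexOrder

lemma spectralDiag_nonneg (hA : A.PosSemidef) (S : Finset ι) (i : ι) :
    0 ≤ spectralDiag hA.isHermitian S i :=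
  sum_nonneg fun j _ ↦ mul_nonneg (hA.eigenvalues_nonneg j) (sq_nonneg _)

lemma spectralDiag_le_diag (hA : A.PosSemidef) (S : Finset ι) (i : ι) :
    spectralDiag hA.isHermitian S i ≤ RCLike.re (A i i) := by
  rw [← spectralDiag_univ hA.isHermitian, RCLike.ofReal_re]
  exact sum_le_univ_sum_of_nonneg fun j ↦ mul_nonneg (hA.eigenvalues_nonneg j) (sq_nonneg _)

end SpectralDiagonal

section Laplacian

variable {V : Type*} [Fintype V] [DecidableEq V] (G : SimpleGraph V) [DecidableRel G.Adj]

lemma lapMatrix_apply_self {R : Type*} [AddGroupWithOne R] (v : V) :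
    G.lapMatrix R v v = G.degree v := by
  simp [SimpleGraph.lapMatrix, SimpleGraph.degMatrix]

section OrderedField

variable {R : Type*} [Field R] [LinearOrder R] [IsStrictOrderedRing R]

lemma sq_lapMatrix_mulVec_div_degree_le (x : V → R) (v : V) :
    (G.lapMatrix R).mulVec x v ^ 2 / G.degree v ≤ ∑ u ∈ G.neighborFinset v, (x v - x u) ^ 2 := by
  have mulVec_eq : (G.lapMatrix R).mulVec x v = ∑ u ∈ G.neighborFinset v, (x v - x u) := by
    simp [SimpleGraph.lapMatrix_mulVec_apply]
  refine div_le_of_le_mul₀ (by positivity) (sum_nonneg fun _ _ ↦ sq_nonneg _) ?_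
  rw [mulVec_eq, mul_comm, ← G.card_neighborFinset_eq_degree]
  exact sq_sum_le_card_mul_sum_sq

/-- In matrix form `L D⁻¹ L ≤ 2 L`, where `D` is the degree matrix. Isolated vertices are harmless:
there `L x` vanishes and `0 / 0 = 0`. -/
lemma sum_sq_lapMatrix_mulVec_div_degree_le (x : V → R) :
    ∑ v, (G.lapMatrix R).mulVec x v ^ 2 / G.degree v ≤ 2 * (x ⬝ᵥ (G.lapMatrix R).mulVec x) := by
  rw [← Matrix.toLinearMap₂'_apply', SimpleGraph.lapMatrix_toLinearMap₂',
    mul_div_cancel₀ _ two_ne_zero]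
  refine sum_le_sum fun v _ ↦ (sq_lapMatrix_mulVec_div_degree_le G x v).trans_eq ?_
  rw [G.neighborFinset_eq_filter, sum_filter]

lemma mul_sum_sq_div_degree_le_of_lapMatrix_mulVec_eq {l : R} {x : V → R}
    (hx : (G.lapMatrix R).mulVec x = l • x) :
    l * ∑ v, x v ^ 2 / G.degree v ≤ 2 * ∑ v, x v ^ 2 := by
  rcases le_or_gt l 0 with hl | hl
  · exact (mul_nonpos_of_nonpos_of_nonneg hl (by positivity)).trans (by positivity)
  refine le_of_mul_le_mul_left ?_ hl
  calc l * (l * ∑ v, x v ^ 2 / G.degree v)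
      = ∑ v, (G.lapMatrix R).mulVec x v ^ 2 / G.degree v := by
        simp only [hx, Pi.smul_apply, smul_eq_mul, mul_pow, mul_div_assoc, ← mul_sum]
        ring
    _ ≤ 2 * (x ⬝ᵥ (G.lapMatrix R).mulVec x) := sum_sq_lapMatrix_mulVec_div_degree_le G x
    _ = l * (2 * ∑ v, x v ^ 2) := by
        rw [hx, dotProduct_smul, smul_eq_mul, mul_left_comm]
        simp only [dotProduct, sq]

end OrderedField

lemma sum_spectralDiag_div_degree_le (S : Finset V) :
    ∑ v, spectralDiag (G.isHermitian_lapMatrix ℝ) S v / G.degree v ≤ 2 * #S := by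
  have eigenvector_bound (j : V) :
      (G.isHermitian_lapMatrix ℝ).eigenvalues j *
        ∑ v, ‖(G.isHermitian_lapMatrix ℝ).eigenvectorBasis j v‖ ^ 2 / G.degree v ≤ 2 := by
    have := sum_norm_sq_eigenvectorBasis (G.isHermitian_lapMatrix ℝ) j
    simp_rw [Real.norm_eq_abs, sq_abs] at this ⊢
    simpa only [this, mul_one] using mul_sum_sq_div_degree_le_of_lapMatrix_mulVec_eq G
      ((G.isHermitian_lapMatrix ℝ).mulVec_eigenvectorBasis j)
  simp_rw [spectralDiag, sum_div, mul_div_assoc]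
  rw [sum_comm]
  simp_rw [← mul_sum]
  calc _ ≤ ∑ _j ∈ S, (2 : ℝ) := sum_le_sum fun j _ ↦ eigenvector_bound j
    _ = 2 * #S := by simp [mul_comm]

lemma exists_card_le_sum_eigenvalues_le_sum_degree (S : Finset V) :
    ∃ U : Finset V, #U ≤ 2 * #S ∧
      ∑ j ∈ S, (G.isHermitian_lapMatrix ℝ).eigenvalues j ≤ ∑ v ∈ U, (G.degree v : ℝ) := by
  have hL := G.posSemidef_lapMatrix ℝ
  set b := spectralDiag hL.isHermitian S
  have b_nonneg (v : V) : 0 ≤ b v := spectralDiag_nonneg hL S v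
  have b_le_degree (v : V) : b v ≤ G.degree v := by
    simpa [lapMatrix_apply_self] using spectralDiag_le_diag hL S v
  have degree_mul_div (v : V) : (G.degree v : ℝ) * (b v / G.degree v) = b v :=
    mul_div_cancel_of_imp' fun h ↦ ((b_le_degree v).trans_eq h).antisymm (b_nonneg v)
  obtain ⟨U, hU, hle⟩ := exists_card_le_sum_mul_le_sum (N := 2 * #S)
    (fun v ↦ Nat.cast_nonneg (G.degree v))
    (fun v ↦ div_nonneg (b_nonneg v) (Nat.cast_nonneg (G.degree v)))
    (fun v ↦ div_le_one_of_le₀ (b_le_degree v) (Nat.cast_nonneg _))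
    (by exact_mod_cast sum_spectralDiag_div_degree_le G S)
  refine ⟨U, hU, ?_⟩
  rw [← sum_spectralDiag]
  simpa only [degree_mul_div] using hle

end Laplacian

section EdgeCounting

variable {V : Type*}

lemma cliqueFree_three_of_four_le_egirth {G : SimpleGraph V} (hG : 4 ≤ G.egirth) :
    G.CliqueFree 3 := by
  intro s hs
  obtain ⟨v, c, hc, hlen⟩ := SimpleGraph.is3Clique_iff_exists_cycle_length_three.mp ⟨s, hs⟩
  have := SimpleGraph.le_egirth.mp hG v c hc
  norm_num [hlen] at this

lemma eq_of_common_neighbors_of_five_le_egirth {G : SimpleGraph V} (hG : 5 ≤ G.egirth)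
    {u v w x : V} (huw : u ≠ w) (huv : G.Adj u v) (hvw : G.Adj v w) (hux : G.Adj u x)
    (hxw : G.Adj x w) : v = x := by
  by_contra hvx
  let c : G.Walk u u := .cons huv (.cons hvw (.cons hxw.symm (.cons hux.symm .nil)))
  have isCycle : c.IsCycle := by
    rw [SimpleGraph.Walk.cons_isCycle_iff, SimpleGraph.Walk.isPath_def]
    grind [huv.ne, hvw.ne, hux.ne, hxw.ne, SimpleGraph.Walk.support_cons,
      SimpleGraph.Walk.support_nil, SimpleGraph.Walk.edges_cons, SimpleGraph.Walk.edges_nil]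
  have := SimpleGraph.le_egirth.mp hG u c isCycle
  norm_num [c] at this

variable [Fintype V] (G : SimpleGraph V) [DecidableRel G.Adj]

/-- An edge is counted twice on the left only if both its ends lie in `U`. -/
lemma sum_degree_le_card_edgeFinset_add_card_edgeFinset_induce (U : Finset V) :
    ∑ v ∈ U, G.degree v ≤ #G.edgeFinset + #(G.induce (U : Set V)).edgeFinset := by
  classical
  have card_induce : #(G.induce (U : Set V)).edgeFinset = #{e ∈ G.edgeFinset | e ∈ U.sym2} := by
    rw [← card_map (Function.Embedding.subtype (· ∈ (U : Set V))).sym2Map, filter_mem_eq_inter]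
    convert congrArg card (G.map_edgeFinset_induce (s := U))
    simp
  have card_ends_le (e : Sym2 V) : #{v ∈ U | v ∈ e} ≤ 1 + if e ∈ U.sym2 then 1 else 0 := by
    induction e with | _ a b
    have subset_ends : {v ∈ U | v ∈ s(a, b)} ⊆ ({a, b} : Finset V) := fun v hv ↦ by
      simpa using (mem_filter.mp hv).2
    split_ifs with hab
    · exact (card_le_card subset_ends).trans card_le_two
    · rw [mk_mem_sym2_iff] at hab
      grind [card_le_one]
  calc ∑ v ∈ U, G.degree v = ∑ v ∈ U, #{e ∈ G.edgeFinset | v ∈ e} := by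
        simp_rw [← G.card_incidenceFinset_eq_degree, G.incidenceFinset_eq_filter]
    _ = ∑ e ∈ G.edgeFinset, #{v ∈ U | v ∈ e} :=
        sum_card_bipartiteAbove_eq_sum_card_bipartiteBelow (fun v e ↦ v ∈ e)
    _ ≤ ∑ e ∈ G.edgeFinset, (1 + if e ∈ U.sym2 then 1 else 0) :=
        sum_le_sum fun e _ ↦ card_ends_le e
    _ = #G.edgeFinset + #(G.induce (U : Set V)).edgeFinset := by
        rw [sum_add_distrib, ← card_eq_sum_ones, ← card_filter, card_induce]

variable {G}

lemma sum_degree_neighborFinset_lt_card_of_five_le_egirth (hG : 5 ≤ G.egirth) (v : V) :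
    ∑ u ∈ G.neighborFinset v, G.degree u < Fintype.card V := by
  classical
  -- Swapping `v` for `u` in each neighbourhood `N(u)` makes these sets pairwise disjoint.
  let swapped (u : V) : Finset V := insert u ((G.neighborFinset u).erase v)
  have card_swapped (u : V) (hu : u ∈ G.neighborFinset v) : #(swapped u) = G.degree u := by
    have hv : v ∈ G.neighborFinset u := by simpa [G.adj_comm] using hu
    rw [card_insert_of_notMem (by simp), card_erase_add_one hv, G.card_neighborFinset_eq_degree]
  have not_adj := G.isIndepSet_neighborSet_of_triangleFree
    (cliqueFree_three_of_four_le_egirth (le_trans (by norm_num) hG)) v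
  have disjoint : (G.neighborFinset v : Set V).PairwiseDisjoint swapped := by
    intro a ha b hb hab
    rw [Finset.mem_coe, G.mem_neighborFinset] at ha hb
    rw [Function.onFun, disjoint_left]
    intro x hxa hxb
    simp only [swapped, mem_insert, mem_erase, G.mem_neighborFinset] at hxa hxb
    rcases hxa with rfl | ⟨hxv, hax⟩ <;> rcases hxb with rfl | ⟨-, hbx⟩
    · exact hab rfl
    · exact not_adj hb ha hab.symm hbx
    · exact not_adj ha hb hab hax
    · exact hab (eq_of_common_neighbors_of_five_le_egirth hG hxv.symm ha hax hb hbx)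
  rw [← sum_congr rfl card_swapped, ← card_biUnion disjoint]
  refine card_lt_univ_of_notMem (x := v) ?_
  simp [swapped]

lemma sum_degree_sq_le_of_five_le_egirth (hG : 5 ≤ G.egirth) :
    ∑ v, G.degree v ^ 2 ≤ Fintype.card V * (Fintype.card V - 1) := by
  have neighbors_sum : ∑ v, ∑ u ∈ G.neighborFinset v, G.degree u = ∑ v, G.degree v ^ 2 := by
    rw [sum_comm' (t' := univ) (s' := fun u ↦ G.neighborFinset u) (by simp [G.adj_comm])]
    simp [sq]
  rw [← neighbors_sum, ← card_univ, ← smul_eq_mul]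
  exact sum_le_card_nsmul _ _ _ fun v _ ↦
    Nat.le_sub_one_of_lt (sum_degree_neighborFinset_lt_card_of_five_le_egirth hG v)

lemma two_mul_card_edgeFinset_le_of_five_le_egirth (hG : 5 ≤ G.egirth) :
    2 * (#G.edgeFinset : ℝ) ≤ Fintype.card V * √(Fintype.card V - 1) := by
  rcases isEmpty_or_nonempty V with hV | hV
  · simp [eq_empty_of_isEmpty G.edgeFinset]
  have cauchy_schwarz :
      (2 * #G.edgeFinset) ^ 2 ≤ Fintype.card V * (Fintype.card V * (Fintype.card V - 1)) := by
    rw [← G.sum_degrees_eq_twice_card_edges]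
    exact sq_sum_le_card_mul_sum_sq.trans
      (Nat.mul_le_mul_left _ (sum_degree_sq_le_of_five_le_egirth hG))
  rw [← Nat.cast_pred Fintype.card_pos, ← Real.sqrt_sq (Nat.cast_nonneg (Fintype.card V)),
    ← Real.sqrt_mul (sq_nonneg _)]
  refine Real.le_sqrt_of_sq_le ?_
  rw [sq (Fintype.card V : ℝ), mul_assoc]
  exact_mod_cast cauchy_schwarz

lemma sum_degree_le_of_five_le_egirth (hG : 5 ≤ G.egirth) {U : Finset V} {k : ℕ} (hU : #U ≤ 2 * k) :
    ∑ v ∈ U, (G.degree v : ℝ) ≤ #G.edgeFinset + ⌊(k : ℝ) * √(2 * k - 1)⌋ := by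
  have induce_egirth : 5 ≤ (G.induce (U : Set V)).egirth :=
    hG.trans (SimpleGraph.IsContained.egirth_le ⟨.induce G U⟩)
  have two_mul_card_le := calc
    2 * (#(G.induce (U : Set V)).edgeFinset : ℝ) ≤ #U * √(#U - 1) := by
        simpa using two_mul_card_edgeFinset_le_of_five_le_egirth induce_egirth
    _ ≤ (2 * k : ℕ) * √((2 * k : ℕ) - 1) := by gcongr
    _ = 2 * (k * √(2 * k - 1)) := by push_cast; ring
  have card_le_floor : (#(G.induce (U : Set V)).edgeFinset : ℤ) ≤ ⌊(k : ℝ) * √(2 * k - 1)⌋ :=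
    Int.le_floor.mpr (by push_cast; linarith)
  calc ∑ v ∈ U, (G.degree v : ℝ)
      ≤ #G.edgeFinset + #(G.induce (U : Set V)).edgeFinset := mod_cast
        sum_degree_le_card_edgeFinset_add_card_edgeFinset_induce G U
    _ ≤ #G.edgeFinset + ⌊(k : ℝ) * √(2 * k - 1)⌋ := by
        gcongr
        exact_mod_cast card_le_floor

end EdgeCounting

theorem sum_lapEigs_le_of_girth_ge_five_general {V : Type*} [Fintype V] [DecidableEq V]
    (G : SimpleGraph V) [DecidableRel G.Adj] (hG : 5 ≤ G.egirth) (S : Finset V) :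
    ∑ j ∈ S, (G.isHermitian_lapMatrix ℝ).eigenvalues j ≤
      #G.edgeFinset + ⌊(#S : ℝ) * √(2 * #S - 1)⌋ := by
  obtain ⟨U, hU, hle⟩ := exists_card_le_sum_eigenvalues_le_sum_degree G S
  exact hle.trans (sum_degree_le_of_five_le_egirth hG hU)

/-- for `k ≥ 1` and a graph `G` of girth at least 5 (every cycle has length
at least 5) with at least `k` vertices, `∑_{i=1}^k λ_i(L(G)) ≤ |E| + ⌊k√(2k − 1)⌋`. -/
theorem sum_lapEigs_le_of_girth_ge_five {n : ℕ} (G : SimpleGraph (Fin n)) [DecidableRel G.Adj]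
    (hG : ∀ (v : Fin n) (c : G.Walk v v), c.IsCycle → 5 ≤ c.length)
    (k : ℕ) (hk1 : 1 ≤ k) (hk2 : k ≤ n) :
    ∑ i ∈ Finset.Icc 1 k, ithLargest (lapEigs G) i ≤
      (G.edgeFinset.card : ℝ) + (⌊(k : ℝ) * Real.sqrt (2 * (k : ℝ) - 1)⌋ : ℝ) := by
  obtain ⟨S, rfl, hS⟩ := exists_card_eq_sum_ithLargest_eq (lapEigs G) hk2
  exact hS.trans_le (sum_lapEigs_le_of_girth_ge_five_general G
    (SimpleGraph.le_egirth.mpr fun v c hc ↦ mod_cast hG v c hc) S)
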